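/- Let p be a positive integer, i ∈ {1, …, p}, ε > 0, and let F : ℝ^p → ℝ be a function whose partial derivative ∂F/∂θ_i exists at every point θ with θ_i ≠ 0. Suppose (∂F/∂θ_i)(θ) · θ_i < 0 for every θ with 0 < |θ_i| < ε. If θ̂ ∈ ℝ^p is a local maximizer of F with |θ̂_i| < ε, then θ̂_i = 0. -/

import Mathlib

section Update

variable {ι : Type*} [DecidableEq ι]

theorem isLocalExtr_comp_update {X : ι → Type*} [∀ j, TopologicalSpace (X j)]
    {β : Type*} [Preorder β] {f : (∀ j, X j) → β} {x : ∀ j, X j}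
    (hf : IsLocalExtr f x) (i : ι) :
    IsLocalExtr (fun s => f (Function.update x i s)) (x i) := by
  have hf' : IsLocalExtr f (Function.update x i (x i)) := by
    rwa [Function.update_eq_self]
  exact hf'.comp_continuous (continuous_const.update i continuous_id).continuousAt

theorem deriv_comp_update_eq_zero_of_isLocalExtr {f : (ι → ℝ) → ℝ} {x : ι → ℝ}
    (hf : IsLocalExtr f x) (i : ι) :
    deriv (fun s => f (Function.update x i s)) (x i) = 0 :=
  (isLocalExtr_comp_update hf i).deriv_eq_zero

theorem local_max_coord_eq_zero_general {i : ι} {ε : ℝ} {F : (ι → ℝ) → ℝ}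
    (hderiv : ∀ θ : ι → ℝ, 0 < |θ i| → |θ i| < ε →
      deriv (fun s => F (Function.update θ i s)) (θ i) ≠ 0)
    {θhat : ι → ℝ} (hextr : IsLocalExtr F θhat) (hsmall : |θhat i| < ε) :
    θhat i = 0 := by
  by_contra hne
  exact hderiv θhat (abs_pos.mpr hne) hsmall
    (deriv_comp_update_eq_zero_of_isLocalExtr hextr i)

end Update

/-- If the `i`-th partial derivative of `F : ℝ^p → ℝ` exists and satisfies
`(∂F/∂θ_i)(θ) · θ_i < 0` whenever `0 < |θ_i| < ε`, then any local maximizer `θ̂` of `F` with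
`|θ̂_i| < ε` has `θ̂_i = 0`. The `i`-th partial derivative of `F` at `θ` is the derivative of
`s ↦ F (Function.update θ i s)` at `θ i`. -/
theorem local_max_coord_eq_zero (p : ℕ) (hp : 0 < p) (i : Fin p) (ε : ℝ) (hε : 0 < ε)
    (F : (Fin p → ℝ) → ℝ)
    (hdiff : ∀ θ : Fin p → ℝ, θ i ≠ 0 →
      DifferentiableAt ℝ (fun s : ℝ => F (Function.update θ i s)) (θ i))
    (hsign : ∀ θ : Fin p → ℝ, 0 < |θ i| → |θ i| < ε →
      deriv (fun s : ℝ => F (Function.update θ i s)) (θ i) * θ i < 0)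
    (θhat : Fin p → ℝ) (hmax : IsLocalMax F θhat) (hsmall : |θhat i| < ε) :
    θhat i = 0 :=
  local_max_coord_eq_zero_general
    (fun θ hpos hlt => left_ne_zero_of_mul (hsign θ hpos hlt).ne) hmax.isExtr hsmall
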